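/- For every U = (f, b, g, q) in the state space 𝒰 and each k ∈ {1, 2, 3, 4}, the vector rₖ(U) is a right eigenvector of the flux Jacobian with eigenvalue λₖ(U), i.e. DF(U)·rₖ(U) = λₖ(U)·rₖ(U), where λ₁(U) = fb/2, λ₂(U) = 3fb/2, λ₃(U) = fb + gq/2, λ₄(U) = fb + 3gq/2 and r₁(U) = (−f/b, 1, 0, 0), r₂(U) = ((fb−3gq)/(4qb), (fb−3gq)/(4qf), g/q, 1), r₃(U) = (0, 0, −g/q, 1), r₄(U) = (0, 0, g/q, 1). -/

import Mathlib

/-- Flux Jacobian of the reduced two-phase thin-film system. -/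
noncomputable def fluxJacobian (f b g q : ℝ) : Matrix (Fin 4) (Fin 4) ℝ :=
  !![f*b,   f^2/2, 0,       0;
     b^2/2, f*b,   0,       0;
     g*b,   f*g,   f*b+g*q, g^2/2;
     b*q,   f*q,   q^2/2,   f*b+g*q]

/-- The eigenvalues of the flux Jacobian. -/
noncomputable def eigval (f b g q : ℝ) : Fin 4 → ℝ :=
  ![f*b/2, 3*(f*b)/2, f*b + g*q/2, f*b + 3*(g*q)/2]

/-- The right eigenvectors of the flux Jacobian. -/
noncomputable def eigvec (f b g q : ℝ) : Fin 4 → (Fin 4 → ℝ) :=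
  ![![-f/b, 1, 0, 0],
    ![(f*b - 3*(g*q))/(4*q*b), (f*b - 3*(g*q))/(4*q*f), g/q, 1],
    ![0, 0, -g/q, 1],
    ![0, 0, g/q, 1]]

/-! The Jacobian is block lower triangular. Its diagonal blocks are `S(f, b)` and `fb + S(g, q)`,
where `S(f, b)` has the eigenvectors `(±f, b)`, and its coupling block is the rank-one matrix
`(g, q)ᵀ (b, f)`. The lower block gives `r₃` and `r₄`; the covector `(b, f)` kills `(-f, b)`, which
gives `r₁`. For `r₂` the coupling maps `(f, b)` into the line of `(g, q)`, an eigenvector of the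
lower block, so a suitable combination `α (f, b) ⊕ β (g, q)` is an eigenvector. -/

open Matrix

theorem mulVec_smul_eq_smul_of_mulVec_eq_smul {R n : Type*} [CommSemiring R] [Fintype n]
    {A : Matrix n n R} {v : n → R} {μ : R} (hv : A *ᵥ v = μ • v) (c : R) :
    A *ᵥ (c • v) = μ • (c • v) := by
  rw [mulVec_smul, hv, smul_comm]

theorem append_fin_two {α : Type*} (v w : Fin 2 → α) :
    Fin.append v w = ![v 0, v 1, w 0, w 1] := by
  ext i
  fin_cases i <;> rfl

theorem smul_append {R α : Type*} [SMul R α] {m n : ℕ} (c : R) (v : Fin m → α) (w : Fin n → α) :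
    c • Fin.append v w = Fin.append (c • v) (c • w) := by
  ext i
  refine Fin.addCases (fun j => ?_) (fun j => ?_) i <;> simp

/-- The Jacobian `S(f, b)` of the single-phase flux `(f, b) ↦ (f²b/2, fb²/2)`, from which the
diagonal blocks of `fluxJacobian` are built. -/
noncomputable def singlePhaseJacobian (f b : ℝ) : Matrix (Fin 2) (Fin 2) ℝ :=
  !![f * b, f ^ 2 / 2; b ^ 2 / 2, f * b]

theorem singlePhaseJacobian_mulVec_self (f b : ℝ) :
    singlePhaseJacobian f b *ᵥ ![f, b] = (3 * (f * b) / 2) • ![f, b] := by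
  ext i
  fin_cases i <;> simp [singlePhaseJacobian] <;> ring

theorem singlePhaseJacobian_mulVec_neg_left (f b : ℝ) :
    singlePhaseJacobian f b *ᵥ ![-f, b] = (f * b / 2) • ![-f, b] := by
  ext i
  fin_cases i <;> simp [singlePhaseJacobian] <;> ring

section FluxJacobian

variable {f b g q : ℝ}

theorem fluxJacobian_mulVec_append (v w : Fin 2 → ℝ) :
    fluxJacobian f b g q *ᵥ Fin.append v w =
      Fin.append (singlePhaseJacobian f b *ᵥ v)
        ((![b, f] ⬝ᵥ v) • ![g, q] + ((f * b) • w + singlePhaseJacobian g q *ᵥ w)) := by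
  simp only [append_fin_two]
  ext i
  fin_cases i <;>
    simp [fluxJacobian, singlePhaseJacobian, mulVec, dotProduct, Fin.sum_univ_four, vecHead,
      vecTail] <;>
    ring

theorem fluxJacobian_mulVec_append_zero {v : Fin 2 → ℝ} {μ : ℝ}
    (hv : singlePhaseJacobian f b *ᵥ v = μ • v) (hcoupling : ![b, f] ⬝ᵥ v = 0) :
    fluxJacobian f b g q *ᵥ Fin.append v (0 : Fin 2 → ℝ) = μ • Fin.append v (0 : Fin 2 → ℝ) := by
  rw [fluxJacobian_mulVec_append, smul_append, hv, hcoupling]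
  simp

theorem fluxJacobian_mulVec_zero_append {w : Fin 2 → ℝ} {μ : ℝ}
    (hw : singlePhaseJacobian g q *ᵥ w = μ • w) :
    fluxJacobian f b g q *ᵥ Fin.append (0 : Fin 2 → ℝ) w =
      (f * b + μ) • Fin.append (0 : Fin 2 → ℝ) w := by
  rw [fluxJacobian_mulVec_append, smul_append, hw]
  simp [add_smul]

-- With `v = α (f, b)` and `w = β (g, q)` the lower block of the eigenvalue equation reads
-- `2fb α + (fb + 3gq/2) β = (3fb/2) β`, i.e. `4fb α = (fb - 3gq) β`.
theorem fluxJacobian_mulVec_append_smul_self :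
    fluxJacobian f b g q *ᵥ
        Fin.append ((f * b - 3 * (g * q)) • ![f, b]) ((4 * (f * b)) • ![g, q]) =
      (3 * (f * b) / 2) •
        Fin.append ((f * b - 3 * (g * q)) • ![f, b]) ((4 * (f * b)) • ![g, q]) := by
  have hdot : ![b, f] ⬝ᵥ ![f, b] = 2 * (f * b) := by
    simp only [vec2_dotProduct, cons_val_zero, cons_val_one]
    ring
  rw [fluxJacobian_mulVec_append, smul_append]
  congr 1
  · exact mulVec_smul_eq_smul_of_mulVec_eq_smul (singlePhaseJacobian_mulVec_self f b) _
  · rw [dotProduct_smul, hdot, mulVec_smul, singlePhaseJacobian_mulVec_self, smul_eq_mul]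
    module

theorem eigvec_zero (hb : b ≠ 0) :
    eigvec f b g q 0 = b⁻¹ • Fin.append ![-f, b] (0 : Fin 2 → ℝ) := by
  rw [append_fin_two]
  ext i
  fin_cases i <;> simp [eigvec, hb, div_eq_inv_mul]

theorem eigvec_one (hf : f ≠ 0) (hb : b ≠ 0) (hq : q ≠ 0) :
    eigvec f b g q 1 = (4 * (f * b) * q)⁻¹ •
      Fin.append ((f * b - 3 * (g * q)) • ![f, b]) ((4 * (f * b)) • ![g, q]) := by
  rw [append_fin_two]
  ext i
  fin_cases i <;> simp [eigvec] <;> field_simp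

theorem eigvec_two (hq : q ≠ 0) :
    eigvec f b g q 2 = q⁻¹ • Fin.append (0 : Fin 2 → ℝ) ![-g, q] := by
  rw [append_fin_two]
  ext i
  fin_cases i <;> simp [eigvec, hq, div_eq_inv_mul]

theorem eigvec_three (hq : q ≠ 0) :
    eigvec f b g q 3 = q⁻¹ • Fin.append (0 : Fin 2 → ℝ) ![g, q] := by
  rw [append_fin_two]
  ext i
  fin_cases i <;> simp [eigvec, hq, div_eq_inv_mul]

theorem eigvec_is_right_eigenvector_general (hf : f ≠ 0) (hb : b ≠ 0) (hq : q ≠ 0) (k : Fin 4) :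
    fluxJacobian f b g q *ᵥ eigvec f b g q k = eigval f b g q k • eigvec f b g q k := by
  match k with
  | 0 =>
    have hcoupling : ![b, f] ⬝ᵥ ![-f, b] = 0 := by
      simp only [vec2_dotProduct, cons_val_zero, cons_val_one]
      ring
    rw [eigvec_zero hb]
    exact mulVec_smul_eq_smul_of_mulVec_eq_smul
      (fluxJacobian_mulVec_append_zero (singlePhaseJacobian_mulVec_neg_left f b) hcoupling) _
  | 1 =>
    rw [eigvec_one hf hb hq]
    exact mulVec_smul_eq_smul_of_mulVec_eq_smul (fluxJacobian_mulVec_append_smul_self) _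
  | 2 =>
    rw [eigvec_two hq]
    exact mulVec_smul_eq_smul_of_mulVec_eq_smul
      (fluxJacobian_mulVec_zero_append (singlePhaseJacobian_mulVec_neg_left g q)) _
  | 3 =>
    rw [eigvec_three hq]
    exact mulVec_smul_eq_smul_of_mulVec_eq_smul
      (fluxJacobian_mulVec_zero_append (singlePhaseJacobian_mulVec_self g q)) _

end FluxJacobian

/-- On the state space `𝒰`, each `rₖ(U)` is a right eigenvector of `DF(U)`
with eigenvalue `λₖ(U)`. -/
theorem eigvec_is_right_eigenvector (f b g q : ℝ)
    (hf : 0 < f) (hb : 0 < b) (hg : 0 < g) (hq : 0 < q) (hU : f*b < g*q) :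
    ∀ k : Fin 4,
      Matrix.mulVec (fluxJacobian f b g q) (eigvec f b g q k) =
        eigval f b g q k • eigvec f b g q k :=
  eigvec_is_right_eigenvector_general hf.ne' hb.ne' hq.ne'
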